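/- arXiv:2111.08754 — 4 statements merged into one kernel-verified Lean document; each statement's English description precedes it below -/
import Mathlib

section
/- The second-order differential operator D_e preserves the ideal I, i.e., D_e(I) ⊆ I; consequently D_e descends to a well-defined linear operator on the quotient algebra A = P/I. -/
open MvPolynomial Finset

/-- The polynomial ring `P = ℂ[p_1,…,p_k,q_1,…,q_{n-k}]`:
the variable `Sum.inl j` is `p_{j+1}` and `Sum.inr l` is `q_{l+1}`. -/
abbrev PR (n k : ℕ) := MvPolynomial (Fin k ⊕ Fin (n - k)) ℂ

/-- `pZ n k a` is the Chern class generator `p_a`, with the conventions `p_0 = 1`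
and `p_a = 0` for `a < 0` or `a > k`. -/
noncomputable def pZ (n k : ℕ) (a : ℤ) : PR n k :=
  if a = 0 then 1
  else if h : 1 ≤ a ∧ a ≤ (k : ℤ) then
    MvPolynomial.X (Sum.inl ⟨(a - 1).toNat, by omega⟩)
  else 0

/-- `qZ n k a` is the Chern class generator `q_a`, with the conventions `q_0 = 1`
and `q_a = 0` for `a < 0` or `a > n-k`. -/
noncomputable def qZ (n k : ℕ) (a : ℤ) : PR n k :=
  if a = 0 then 1
  else if h : 1 ≤ a ∧ a ≤ ((n - k : ℕ) : ℤ) then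
    MvPolynomial.X (Sum.inr ⟨(a - 1).toNat, by omega⟩)
  else 0

/-- `R_m = Σ_{r+s=m, r,s ≥ 0} p_r q_s`. -/
noncomputable def Rm (n k : ℕ) (m : ℕ) : PR n k :=
  ∑ x ∈ Finset.HasAntidiagonal.antidiagonal m, pZ n k x.1 * qZ n k x.2

/-- The ideal `I ⊆ P` generated by `R_1, …, R_n`. -/
noncomputable def Igr (n k : ℕ) : Ideal (PR n k) :=
  Ideal.span ((fun m => Rm n k m) '' (Finset.Icc 1 n : Finset ℕ))

/-- Multiplication by `g` as a linear endomorphism of `P`. -/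
noncomputable def Mop (n k : ℕ) (g : PR n k) : Module.End ℂ (PR n k) :=
  LinearMap.mulLeft ℂ g

/-- The partial derivative with respect to the variable `i`, as a linear endomorphism. -/
noncomputable def Pd (n k : ℕ) (i : Fin k ⊕ Fin (n - k)) : Module.End ℂ (PR n k) :=
  (MvPolynomial.pderiv i).toLinearMap

/-- The second-order differential operator
`D_e = -Σ_{j=1}^{k}(k-j+1)(n-k+j-1)·p_{j-1}·∂/∂p_j
      + Σ_{j=1}^{n-k}(k+j-1)(n-k-j+1)·q_{j-1}·∂/∂q_j
      + Σ_{j,l=1}^{k}(Σ_{d=0}^{j-1}(j+l-2d-1)·p_d·p_{j+l-d-1})·∂²/(∂p_j∂p_l)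
      - Σ_{j,l=1}^{n-k}(Σ_{d=0}^{j-1}(j+l-2d-1)·q_d·q_{j+l-d-1})·∂²/(∂q_j∂q_l)
      + 2 Σ_{j=1}^{k} Σ_{l=1}^{n-k}(j+l-1)·(Σ_{d=0}^{j-1} p_d·q_{j+l-d-1})·∂²/(∂p_j∂q_l)`.
(The index `j' : Fin k` corresponds to `j = j'+1`, and similarly for the other indices.) -/
noncomputable def De (n k : ℕ) : Module.End ℂ (PR n k) :=
  ∑ j : Fin k, (-(((k : ℂ) - (j : ℕ)) * ((n : ℂ) - (k : ℕ) + (j : ℕ)))) •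
      (Mop n k (pZ n k (j : ℕ)) * Pd n k (Sum.inl j))
  + ∑ l : Fin (n - k), (((k : ℂ) + (l : ℕ)) * ((n : ℂ) - (k : ℕ) - (l : ℕ))) •
      (Mop n k (qZ n k (l : ℕ)) * Pd n k (Sum.inr l))
  + ∑ j : Fin k, ∑ l : Fin k,
      Mop n k (∑ d ∈ Finset.range ((j : ℕ) + 1),
          ((((j : ℕ) : ℂ) + (l : ℕ) + 1 - 2 * (d : ℕ))) •
            (pZ n k d * pZ n k ((j : ℕ) + (l : ℕ) + 1 - (d : ℕ) : ℤ)))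
        * (Pd n k (Sum.inl j) * Pd n k (Sum.inl l))
  - ∑ j : Fin (n - k), ∑ l : Fin (n - k),
      Mop n k (∑ d ∈ Finset.range ((j : ℕ) + 1),
          ((((j : ℕ) : ℂ) + (l : ℕ) + 1 - 2 * (d : ℕ))) •
            (qZ n k d * qZ n k ((j : ℕ) + (l : ℕ) + 1 - (d : ℕ) : ℤ)))
        * (Pd n k (Sum.inr j) * Pd n k (Sum.inr l))
  + ∑ j : Fin k, ∑ l : Fin (n - k),
      (2 * (((j : ℕ) : ℂ) + (l : ℕ) + 1)) •
        (Mop n k (∑ d ∈ Finset.range ((j : ℕ) + 1),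
            pZ n k d * qZ n k ((j : ℕ) + (l : ℕ) + 1 - (d : ℕ) : ℤ))
          * (Pd n k (Sum.inl j) * Pd n k (Sum.inr l)))

section GenericIdentities
variable {A : Type*} [CommRing A] [Algebra ℂ A]

theorem aux_half (x : A) (h : x + x = 0) : x = 0 := by
  have h2 : (2 : ℂ) • x = 0 := by rw [two_smul, h]
  have := congrArg (fun y => (2⁻¹ : ℂ) • y) h2
  simpa [smul_smul] using this

theorem aux_triple (N : ℕ) (p q : ℕ → A) (c : ℕ → ℕ → A) (hc : ∀ d u, c d u + c u d = 0) :
    (∑ d ∈ range (N + 1), ∑ u ∈ range (N + 1),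
      if d + u ≤ N then c d u * (p d * p u * q (N - (d + u))) else 0) = 0 := by
  apply aux_half
  conv_lhs => 
    arg 2
    rw [Finset.sum_comm]
  rw [← Finset.sum_add_distrib]
  refine Finset.sum_eq_zero fun d _ => ?_
  rw [← Finset.sum_add_distrib]
  refine Finset.sum_eq_zero fun u _ => ?_
  rw [add_comm u d]
  split_ifs
  · linear_combination (p d * p u * q (N - (d + u))) * hc d u
  · simp

theorem aux_R (p q : ℕ → A) (hR : ∀ m, 1 ≤ m → ∑ u ∈ range (m + 1), p u * q (m - u) = 0)
    (N d : ℕ) (hd : d ≤ N) :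
    ((N : A) - d) * (∑ u ∈ range (N + 1), if d + u ≤ N then p u * q (N - (d + u)) else 0) = 0 := by
  rcases Nat.eq_or_lt_of_le hd with h | h
  · subst h; simp
  · have : (∑ u ∈ range (N + 1), if d + u ≤ N then p u * q (N - (d + u)) else 0)
        = ∑ u ∈ range (N - d + 1), p u * q (N - d - u) := by
      rw [← Finset.sum_filter]
      refine Finset.sum_congr ?_ ?_
      · ext u; simp; omega
      · intro u _; rw [Nat.sub_add_eq]
    rw [this, hR _ (by omega), mul_zero]

theorem aux_T (p q : ℕ → A) (hR : ∀ m, 1 ≤ m → ∑ u ∈ range (m + 1), p u * q (m - u) = 0)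
    (a m : ℕ) :
    ∑ r ∈ range (m + 1),
      ((∑ d ∈ range (a + 1), ((a : A) + r - 2 * d) * (p d * p (a + r - d))) * q (m - r)
       + p r * (((a : A) + (m - r : ℕ)) * ∑ d ∈ range (a + 1), p d * q (a + (m - r) - d))) = 0 := by
  obtain ⟨N, hN⟩ : ∃ N, N = a + m := ⟨_, rfl⟩
  have hNc : (N : A) = a + m := by rw [hN]; push_cast; ring
  have T1 : ∑ r ∈ range (m + 1),
      (∑ d ∈ range (a + 1), ((a : A) + r - 2 * d) * (p d * p (a + r - d))) * q (m - r)
      = ∑ d ∈ range (N + 1), ∑ u ∈ range (N + 1),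
        if d ≤ a ∧ a ≤ d + u ∧ d + u ≤ N then
          ((u : A) - d) * (p d * p u * q (N - (d + u))) else 0 := by
    simp_rw [Finset.sum_mul]
    rw [Finset.sum_comm]
    have : ∀ d ∈ range (a + 1), ∑ r ∈ range (m + 1),
        ((a : A) + r - 2 * d) * (p d * p (a + r - d)) * q (m - r)
        = ∑ u ∈ range (N + 1), if d ≤ a ∧ a ≤ d + u ∧ d + u ≤ N then
          ((u : A) - d) * (p d * p u * q (N - (d + u))) else 0 := by
      intro d hd
      rw [Finset.mem_range] at hd
      rw [← Finset.sum_filter]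
      refine Finset.sum_nbij' (fun r => a + r - d) (fun u => u + d - a) ?_ ?_ ?_ ?_ ?_
      · intro r hr; simp at hr ⊢; omega
      · intro r hr; simp at hr ⊢; omega
      · intro r hr; simp at hr ⊢; omega
      · intro r hr; simp at hr ⊢; omega
      · intro r hr
        rw [Finset.mem_range] at hr
        rw [show N - (d + (a + r - d)) = m - r by omega, Nat.cast_sub (by omega)]
        push_cast; ring
    rw [Finset.sum_congr rfl this]
    refine Finset.sum_subset (fun x hx => ?_) (fun d _ hd => ?_)
    · simp at hx ⊢; omega
    · refine Finset.sum_eq_zero fun u _ => if_neg ?_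
      simp at hd; omega
  have T2 : ∑ r ∈ range (m + 1),
      p r * (((a : A) + (m - r : ℕ)) * ∑ d ∈ range (a + 1), p d * q (a + (m - r) - d))
      = ∑ d ∈ range (N + 1), ∑ u ∈ range (N + 1),
        if d ≤ a ∧ u ≤ m ∧ d + u ≤ N then
          ((N : A) - u) * (p d * p u * q (N - (d + u))) else 0 := by
    rw [Finset.sum_comm]
    have : ∀ r ∈ range (m + 1), 
        p r * (((a : A) + (m - r : ℕ)) * ∑ d ∈ range (a + 1), p d * q (a + (m - r) - d))
        = ∑ d ∈ range (N + 1), if d ≤ a ∧ r ≤ m ∧ d + r ≤ N then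
          ((N : A) - r) * (p d * p r * q (N - (d + r))) else 0 := by
      intro r hr
      rw [Finset.mem_range] at hr
      rw [← Finset.sum_filter, Finset.mul_sum, Finset.mul_sum]
      refine Finset.sum_congr ?_ ?_
      · ext d; simp; omega
      · intro d hd
        simp at hd
        rw [show a + (m - r) - d = N - (d + r) by omega, Nat.cast_sub (by omega), hNc]
        ring
    rw [Finset.sum_congr rfl this]
    refine Finset.sum_subset (fun x hx => ?_) (fun d _ hd => ?_)
    · simp at hx ⊢; omega
    · refine Finset.sum_eq_zero fun u _ => if_neg ?_
      simp at hd; omega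
  have R1 : ∑ d ∈ range (N + 1), ∑ u ∈ range (N + 1),
        (if d ≤ a ∧ d + u ≤ N then
          ((N : A) - d) * (p d * p u * q (N - (d + u))) else 0) = 0 := by
    refine Finset.sum_eq_zero fun d hd => ?_
    by_cases hda : d ≤ a
    · have := aux_R p q hR N d (by simp at hd; omega)
      have h2 := congrArg (fun x => p d * x) this
      simp only [mul_zero] at h2
      refine Eq.trans ?_ h2
      rw [Finset.mul_sum, Finset.mul_sum]
      refine Finset.sum_congr rfl fun u _ => ?_
      simp only [hda, true_and]
      split_ifs <;> ring
    · exact Finset.sum_eq_zero fun u _ => if_neg (by omega)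
  have R2 : ∑ d ∈ range (N + 1), ∑ u ∈ range (N + 1),
        (if m < u ∧ d + u ≤ N then
          ((N : A) - u) * (p d * p u * q (N - (d + u))) else 0) = 0 := by
    rw [Finset.sum_comm]
    refine Finset.sum_eq_zero fun d hd => ?_
    by_cases hda : m < d
    · have := aux_R p q hR N d (by simp at hd; omega)
      have h2 := congrArg (fun x => p d * x) this
      simp only [mul_zero] at h2
      refine Eq.trans ?_ h2
      rw [Finset.mul_sum, Finset.mul_sum]
      refine Finset.sum_congr rfl fun u _ => ?_
      simp only [hda, true_and, add_comm u d]
      split_ifs <;> ring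
    · exact Finset.sum_eq_zero fun u _ => if_neg (by omega)
  have E := aux_triple N p q (fun d u => if d + u < a then ((u : A) - d) else 0) (by
    intro d u
    rw [add_comm u d]
    split_ifs <;> ring)
  rw [Finset.sum_add_distrib, T1, T2]
  have key : ∀ x y z : A, x = 0 → y = 0 → z = 0 → x - y - z = 0 := by
    rintro _ _ _ rfl rfl rfl; simp
  refine Eq.trans ?_ (key _ _ _ R1 R2 E)
  simp only [← Finset.sum_add_distrib, ← Finset.sum_sub_distrib]
  refine Finset.sum_congr rfl fun d _ => Finset.sum_congr rfl fun u _ => ?_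
  by_cases h1 : d + u ≤ N
  swap
  · simp [h1]
  by_cases h2 : d ≤ a
  · by_cases h3 : u ≤ m
    · have h3' : ¬ m < u := by omega
      by_cases h4 : a ≤ d + u
      · have h4' : ¬ d + u < a := by omega
        simp only [h1, h2, h3, h4, h3', h4', if_true, if_false, and_self, and_true, and_false, false_and]
        ring
      · have h4' : d + u < a := by omega
        simp only [h1, h2, h3, h4, h3', h4', if_true, if_false, and_self, and_true, and_false, false_and]
        ring
    · have h3' : m < u := by omega
      by_cases h4 : a ≤ d + u
      · have h4' : ¬ d + u < a := by omega
        simp only [h1, h2, h3, h4, h3', h4', if_true, if_false, and_self, and_true, and_false, false_and]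
        ring
      · have h4' : d + u < a := by omega
        simp only [h1, h2, h3, h4, h3', h4', if_true, if_false, and_self, and_true, and_false, false_and]
        ring
  · have h4' : ¬ d + u < a := by omega
    have h3' : ¬ m < u := by omega
    simp only [h1, h2, h3', h4', if_false, false_and, ite_self, zero_mul]
    ring

/-- antisymmetric full sum -/
theorem aux_anti (p : ℕ → A) (N : ℕ) :
    ∑ d ∈ range (N + 1), ((N : A) - 2 * d) * (p d * p (N - d)) = 0 := by
  apply aux_half
  conv_lhs =>
    arg 2
    rw [← Finset.sum_flip]
  rw [← Finset.sum_add_distrib]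
  refine Finset.sum_eq_zero fun d hd => ?_
  simp at hd
  rw [Nat.cast_sub (by omega), show N - (N - d) = d by omega]
  ring

/-- symmetry of the coefficients -/
theorem aux_symm (p : ℕ → A) (a b : ℕ) :
    ∑ d ∈ range (a + 1), ((a : A) + b + 1 - 2 * d) * (p d * p (a + b + 1 - d)) =
    ∑ d ∈ range (b + 1), ((b : A) + a + 1 - 2 * d) * (p d * p (b + a + 1 - d)) := by
  have h := aux_anti p (a + b + 1)
  rw [show a + b + 1 + 1 = (a + 1) + (b + 1) by ring, Finset.sum_range_add] at h
  push_cast at h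
  rw [eq_neg_of_add_eq_zero_left h, ← Finset.sum_range_reflect, ← Finset.sum_neg_distrib]
  refine Finset.sum_congr rfl fun d hd => ?_
  simp at hd
  rw [show a + b + 1 - (a + 1 + (b + 1 - 1 - d)) = d by omega,
    show a + 1 + (b + 1 - 1 - d) = a + b + 1 - d by omega, add_comm b a,
    Nat.cast_sub (by omega)]
  push_cast
  ring

/-- the first-order identity -/
theorem aux_D (p q : ℕ → A) (hR : ∀ m, 1 ≤ m → ∑ u ∈ range (m + 1), p u * q (m - u) = 0)
    (K L : A) (m : ℕ) :
    ∑ u ∈ range (m + 1), (-((K - u) * (L + u)) * (p u * q (m - u)) +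
      ((K + (m - u : ℕ)) * (L - (m - u : ℕ))) * (p u * q (m - u)))
    + ∑ r ∈ range (m + 2), (2 * (m : A)) * ∑ d ∈ range r, p d * q (m - d) = 0 := by
  have h : ∑ r ∈ range (m + 2), (2 * (m : A)) * ∑ d ∈ range r, p d * q (m - d)
     = ∑ d ∈ range (m + 1), (2 * (m : A)) * ((m - d : ℕ) + 1) * (p d * q (m - d)) := by
    rw [← Finset.mul_sum]
    simp_rw [mul_assoc (2 * (m : A))]
    rw [← Finset.mul_sum]
    congr 1
    have : ∀ r ∈ range (m + 2), ∑ d ∈ range r, p d * q (m - d) =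
        ∑ d ∈ range (m + 1), if d < r then p d * q (m - d) else 0 := by
      intro r hr
      rw [← Finset.sum_filter]
      refine Finset.sum_congr ?_ fun _ _ => rfl
      ext d; simp at hr ⊢; omega
    rw [Finset.sum_congr rfl this, Finset.sum_comm]
    refine Finset.sum_congr rfl fun d hd => ?_
    rw [← Finset.sum_filter, Finset.sum_const, nsmul_eq_mul]
    congr 1
    have : (range (m + 2)).filter (fun r => d < r) = Finset.Ico (d + 1) (m + 2) := by
      ext r; simp; omega
    rw [this, Nat.card_Ico]
    simp at hd
    rw [show m + 2 - (d + 1) = (m - d) + 1 by omega]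
    push_cast; rfl
  rw [h, ← Finset.sum_add_distrib]
  have h2 : ∀ u ∈ range (m + 1), (-((K - u) * (L + u)) * (p u * q (m - u)) +
      ((K + (m - u : ℕ)) * (L - (m - u : ℕ))) * (p u * q (m - u))
      + (2 * (m : A)) * ((m - u : ℕ) + 1) * (p u * q (m - u)))
      = ((m : A) * (L - K + m + 2)) * (p u * q (m - u)) := by
    intro u hu
    simp at hu
    rw [Nat.cast_sub (by omega)]
    ring
  rw [Finset.sum_congr rfl h2, ← Finset.mul_sum]
  rcases Nat.eq_zero_or_pos m with rfl | hm
  · simp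
  · rw [hR m hm, mul_zero]

end GenericIdentities

section Operator
variable (n k : ℕ)

theorem pZ_zero : pZ n k ((0 : ℕ) : ℤ) = 1 := by simp [pZ]
theorem qZ_zero : qZ n k ((0 : ℕ) : ℤ) = 1 := by simp [qZ]

theorem pZ_X (a : Fin k) : pZ n k (((a : ℕ) + 1 : ℕ) : ℤ) = X (Sum.inl a) := by
  have := a.2
  unfold pZ
  rw [if_neg (by omega), dif_pos (by omega)]
  congr 3
  simp

theorem qZ_X (a : Fin (n - k)) : qZ n k (((a : ℕ) + 1 : ℕ) : ℤ) = X (Sum.inr a) := by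
  have := a.2
  unfold qZ
  rw [if_neg (by omega), dif_pos (by omega)]
  congr 3
  simp

theorem pZ_big (r : ℕ) (h : k < r) : pZ n k (r : ℤ) = 0 := by
  unfold pZ
  rw [if_neg (by omega), dif_neg (by omega)]

theorem qZ_big (r : ℕ) (h : n - k < r) : qZ n k (r : ℤ) = 0 := by
  unfold qZ
  rw [if_neg (by omega), dif_neg (by omega)]

theorem Rm_range (m : ℕ) : Rm n k m = ∑ u ∈ range (m + 1), pZ n k u * qZ n k ((m - u : ℕ) : ℤ) := by
  unfold Rm
  rw [Finset.Nat.sum_antidiagonal_eq_sum_range_succ (fun i j : ℕ => pZ n k i * qZ n k j)]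

theorem Rm_mem (hk : k ≤ n) (m : ℕ) (hm : 1 ≤ m) : Rm n k m ∈ Igr n k := by
  by_cases h : m ≤ n
  · exact Ideal.subset_span ⟨m, by simp; omega, rfl⟩
  · have : Rm n k m = 0 := by
      rw [Rm_range]
      refine Finset.sum_eq_zero fun u _ => ?_
      by_cases hu : k < u
      · rw [pZ_big n k u hu, zero_mul]
      · rw [qZ_big n k _ (by omega), mul_zero]
    rw [this]; exact zero_mem _

/-- first-order coefficients -/
noncomputable def bC : Fin k ⊕ Fin (n - k) → PR n k
  | Sum.inl j => -(((k : PR n k) - (j : ℕ)) * ((n : PR n k) - (k : ℕ) + (j : ℕ))) * pZ n k (j : ℕ)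
  | Sum.inr l => (((k : PR n k) + (l : ℕ)) * ((n : PR n k) - (k : ℕ) - (l : ℕ))) * qZ n k (l : ℕ)

/-- second-order coefficients -/
noncomputable def aC : Fin k ⊕ Fin (n - k) → Fin k ⊕ Fin (n - k) → PR n k
  | Sum.inl j, Sum.inl l => ∑ d ∈ range ((j : ℕ) + 1),
      (((j : ℕ) : PR n k) + (l : ℕ) + 1 - 2 * (d : ℕ)) *
        (pZ n k (d : ℕ) * pZ n k (((j : ℕ) + l + 1 - d : ℕ) : ℤ))
  | Sum.inr j, Sum.inr l => -∑ d ∈ range ((j : ℕ) + 1),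
      (((j : ℕ) : PR n k) + (l : ℕ) + 1 - 2 * (d : ℕ)) *
        (qZ n k (d : ℕ) * qZ n k (((j : ℕ) + l + 1 - d : ℕ) : ℤ))
  | Sum.inl j, Sum.inr l => (2 * (((j : ℕ) : PR n k) + (l : ℕ) + 1)) * ∑ d ∈ range ((j : ℕ) + 1),
        (pZ n k (d : ℕ) * qZ n k (((j : ℕ) + l + 1 - d : ℕ) : ℤ))
  | Sum.inr _, Sum.inl _ => 0

theorem De_apply (f : PR n k) : De n k f = ∑ i, bC n k i * pderiv i f
    + ∑ i, ∑ j, aC n k i j * pderiv i (pderiv j f) := by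
  have hz : ∀ a b d : ℕ, d ∈ range (a + 1) →
      ((a : ℤ) + b + 1 - d) = ((a + b + 1 - d : ℕ) : ℤ) := by
    intro a b d h; simp at h; omega
  have h1 : ∀ (c : ℂ) (x : PR n k), c • x = algebraMap ℂ (PR n k) c * x := fun c x =>
    Algebra.smul_def c x
  simp only [Fintype.sum_sum_type, bC, aC, De, Mop, Pd, LinearMap.add_apply, LinearMap.sub_apply,
    LinearMap.sum_apply, LinearMap.smul_apply, Module.End.mul_apply, LinearMap.mulLeft_apply,
    Derivation.coeFn_coe, h1, map_neg, map_mul, map_sub, map_add,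
    map_natCast, map_one, map_ofNat, Finset.sum_add_distrib, zero_mul, Finset.sum_const_zero,
    neg_mul, Finset.sum_neg_distrib]
  have e1 : ∀ j l : Fin k, ∑ d ∈ range ((j : ℕ) + 1),
      (((j : ℕ) : PR n k) + (l : ℕ) + 1 - 2 * (d : ℕ)) *
        (pZ n k (d : ℕ) * pZ n k (((j : ℕ) : ℤ) + (l : ℕ) + 1 - d)) = ∑ d ∈ range ((j : ℕ) + 1),
      (((j : ℕ) : PR n k) + (l : ℕ) + 1 - 2 * (d : ℕ)) *
        (pZ n k (d : ℕ) * pZ n k (((j : ℕ) + l + 1 - d : ℕ) : ℤ)) := fun j l =>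
    Finset.sum_congr rfl fun d hd => by rw [hz _ _ d hd]
  have e2 : ∀ j l : Fin (n - k), ∑ d ∈ range ((j : ℕ) + 1),
      (((j : ℕ) : PR n k) + (l : ℕ) + 1 - 2 * (d : ℕ)) *
        (qZ n k (d : ℕ) * qZ n k (((j : ℕ) : ℤ) + (l : ℕ) + 1 - d)) = ∑ d ∈ range ((j : ℕ) + 1),
      (((j : ℕ) : PR n k) + (l : ℕ) + 1 - 2 * (d : ℕ)) *
        (qZ n k (d : ℕ) * qZ n k (((j : ℕ) + l + 1 - d : ℕ) : ℤ)) := fun j l =>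
    Finset.sum_congr rfl fun d hd => by rw [hz _ _ d hd]
  have e3 : ∀ (j : Fin k) (l : Fin (n - k)), ∑ d ∈ range ((j : ℕ) + 1),
        (pZ n k (d : ℕ) * qZ n k (((j : ℕ) : ℤ) + (l : ℕ) + 1 - d)) = ∑ d ∈ range ((j : ℕ) + 1),
        (pZ n k (d : ℕ) * qZ n k (((j : ℕ) + l + 1 - d : ℕ) : ℤ)) := fun j l =>
    Finset.sum_congr rfl fun d hd => by rw [hz _ _ d hd]
  simp only [e1, e2, e3, mul_assoc]
  abel

/-- polarization of `De` -/
noncomputable def Gam (g : PR n k) : Derivation ℂ (PR n k) (PR n k) :=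
  ∑ i, ∑ j, aC n k i j • ((pderiv i g) • pderiv j + (pderiv j g) • pderiv i)

theorem Gam_apply (g f : PR n k) : Gam n k g f =
    ∑ i, ∑ j, aC n k i j * (pderiv i g * pderiv j f + pderiv j g * pderiv i f) := by
  have hs : ∀ {ι : Type} (s : Finset ι) (F : ι → Derivation ℂ (PR n k) (PR n k)),
      (∑ i ∈ s, F i) f = ∑ i ∈ s, F i f := by
    intro ι s F
    classical
    induction s using Finset.induction_on with
    | empty => simp
    | insert a s ha ih => rw [Finset.sum_insert ha, Finset.sum_insert ha, Derivation.add_apply, ih]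
  unfold Gam
  simp only [hs, Derivation.smul_apply, Derivation.add_apply, smul_eq_mul]

theorem Gam_comm (g f : PR n k) : Gam n k g f = Gam n k f g := by
  rw [Gam_apply, Gam_apply]
  refine Finset.sum_congr rfl fun i _ => Finset.sum_congr rfl fun j _ => ?_
  ring

theorem Gam_X (i j : Fin k ⊕ Fin (n - k)) : Gam n k (X i) (X j) = aC n k i j + aC n k j i := by
  classical
  rw [Gam_apply]
  simp only [mul_add, Finset.sum_add_distrib, pderiv_X, Pi.single_apply]
  congr 1
  · rw [Finset.sum_eq_single i, Finset.sum_eq_single j] <;> simp +contextual [eq_comm]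
  · rw [Finset.sum_eq_single j, Finset.sum_eq_single i] <;> simp +contextual [eq_comm]

theorem De_mul (f g : PR n k) : De n k (f * g) = f * De n k g + g * De n k f + Gam n k f g := by
  rw [De_apply, De_apply, De_apply, Gam_apply]
  have h1 : ∑ i, bC n k i * pderiv i (f * g) =
      f * ∑ i, bC n k i * pderiv i g + g * ∑ i, bC n k i * pderiv i f := by
    rw [Finset.mul_sum, Finset.mul_sum, ← Finset.sum_add_distrib]
    refine Finset.sum_congr rfl fun i _ => ?_
    rw [Derivation.leibniz, smul_eq_mul, smul_eq_mul]
    ring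
  have h2 : ∑ i, ∑ j, aC n k i j * pderiv i (pderiv j (f * g)) =
      f * (∑ i, ∑ j, aC n k i j * pderiv i (pderiv j g))
      + g * (∑ i, ∑ j, aC n k i j * pderiv i (pderiv j f))
      + ∑ i, ∑ j, aC n k i j * (pderiv i f * pderiv j g + pderiv j f * pderiv i g) := by
    rw [Finset.mul_sum, Finset.mul_sum, ← Finset.sum_add_distrib, ← Finset.sum_add_distrib]
    refine Finset.sum_congr rfl fun i _ => ?_
    rw [Finset.mul_sum, Finset.mul_sum, ← Finset.sum_add_distrib, ← Finset.sum_add_distrib]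
    refine Finset.sum_congr rfl fun j _ => ?_
    simp only [Derivation.leibniz, smul_eq_mul, map_add]
    ring
  rw [h1, h2]
  ring

theorem De_one : De n k 1 = 0 := by
  rw [De_apply]; simp

theorem De_X (i : Fin k ⊕ Fin (n - k)) : De n k (X i) = bC n k i := by
  classical
  rw [De_apply]
  have : ∀ a b : Fin k ⊕ Fin (n - k), pderiv a (pderiv b (X i : PR n k)) = 0 := by
    intro a b
    rw [pderiv_X, Pi.single_apply]
    split_ifs <;> simp
  simp only [this, mul_zero, Finset.sum_const_zero, add_zero]
  simp only [pderiv_X, Pi.single_apply]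
  simp

theorem De_p (r : ℕ) : De n k (pZ n k ((r + 1 : ℕ) : ℤ)) =
    -(((k : PR n k) - (r : ℕ)) * ((n : PR n k) - (k : ℕ) + (r : ℕ))) * pZ n k (r : ℕ) := by
  rcases lt_trichotomy r k with h | h | h
  · exact (congrArg _ (pZ_X n k ⟨r, h⟩)).trans (De_X n k _)
  · subst h; rw [pZ_big n r (r + 1) (by omega)]; simp
  · rw [pZ_big n k (r + 1) (by omega), pZ_big n k r h]; simp

theorem De_q (hk : k ≤ n) (r : ℕ) : De n k (qZ n k ((r + 1 : ℕ) : ℤ)) =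
    (((k : PR n k) + (r : ℕ)) * ((n : PR n k) - (k : ℕ) - (r : ℕ))) * qZ n k (r : ℕ) := by
  rcases lt_trichotomy r (n - k) with h | h | h
  · exact (congrArg _ (qZ_X n k ⟨r, h⟩)).trans (De_X n k _)
  · subst h; rw [qZ_big n k (n - k + 1) (by omega), Nat.cast_sub hk]; simp
  · rw [qZ_big n k (r + 1) (by omega), qZ_big n k r h]; simp

theorem Gam_pp (a : Fin k) (r : ℕ) : Gam n k (X (Sum.inl a)) (pZ n k (r : ℤ)) =
    2 * ∑ d ∈ range ((a : ℕ) + 1), (((a : ℕ) : PR n k) + r - 2 * d) *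
      (pZ n k (d : ℤ) * pZ n k (((a : ℕ) + r - d : ℕ) : ℤ)) := by
  rcases Nat.eq_zero_or_pos r with h | h
  · subst h
    have := aux_anti (fun r : ℕ => pZ n k (r : ℤ)) (a : ℕ)
    rw [pZ_zero, Derivation.map_one_eq_zero]
    simp only [Nat.cast_zero, add_zero]
    rw [this, mul_zero]
  · by_cases hr : k < r
    · rw [pZ_big n k r hr, map_zero, Finset.sum_eq_zero, mul_zero]
      intro d hd
      simp at hd
      rw [pZ_big n k (a + r - d) (by omega)]; simp
    · obtain ⟨b, rfl⟩ : ∃ b, r = b + 1 := ⟨r - 1, by omega⟩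
      have := aux_symm (fun r : ℕ => pZ n k (r : ℤ)) (a : ℕ) b
      refine (congrArg _ (pZ_X n k ⟨b, by omega⟩)).trans ?_
      rw [Gam_X]
      simp only [aC]
      rw [← this, two_mul]
      push_cast
      simp only [add_assoc]

theorem Gam_qq (a : Fin (n - k)) (r : ℕ) : Gam n k (X (Sum.inr a)) (qZ n k (r : ℤ)) =
    -2 * ∑ d ∈ range ((a : ℕ) + 1), (((a : ℕ) : PR n k) + r - 2 * d) *
      (qZ n k (d : ℤ) * qZ n k (((a : ℕ) + r - d : ℕ) : ℤ)) := by
  rcases Nat.eq_zero_or_pos r with h | h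
  · subst h
    have := aux_anti (fun r : ℕ => qZ n k (r : ℤ)) (a : ℕ)
    rw [qZ_zero, Derivation.map_one_eq_zero]
    simp only [Nat.cast_zero, add_zero]
    rw [this, mul_zero]
  · by_cases hr : n - k < r
    · rw [qZ_big n k r hr, map_zero, Finset.sum_eq_zero, mul_zero]
      intro d hd
      simp at hd
      rw [qZ_big n k (a + r - d) (by omega)]; simp
    · obtain ⟨b, rfl⟩ : ∃ b, r = b + 1 := ⟨r - 1, by omega⟩
      have := aux_symm (fun r : ℕ => qZ n k (r : ℤ)) (a : ℕ) b
      refine (congrArg _ (qZ_X n k ⟨b, by omega⟩)).trans ?_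
      rw [Gam_X]
      simp only [aC]
      rw [← this, neg_mul, two_mul, neg_add]
      push_cast
      simp only [add_assoc]

theorem phi_R (hk : k ≤ n) (m : ℕ) (hm : 1 ≤ m) : ∑ u ∈ range (m + 1),
    Ideal.Quotient.mk (Igr n k) (pZ n k (u : ℤ)) *
      Ideal.Quotient.mk (Igr n k) (qZ n k ((m - u : ℕ) : ℤ)) = 0 := by
  have := Ideal.Quotient.eq_zero_iff_mem.2 (Rm_mem n k hk m hm)
  rw [Rm_range, map_sum] at this
  simpa only [map_mul] using this

theorem phi_R' (hk : k ≤ n) (m : ℕ) (hm : 1 ≤ m) : ∑ u ∈ range (m + 1),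
    Ideal.Quotient.mk (Igr n k) (qZ n k (u : ℤ)) *
      Ideal.Quotient.mk (Igr n k) (pZ n k ((m - u : ℕ) : ℤ)) = 0 := by
  rw [← phi_R n k hk m hm, ← Finset.sum_flip]
  refine Finset.sum_congr rfl fun u hu => ?_
  simp at hu
  rw [show m - (m - u) = u by omega, mul_comm]

theorem Gam_pq (hk : k ≤ n) (m r s : ℕ) (h : r + s = m + 1) :
    Ideal.Quotient.mk (Igr n k) (Gam n k (pZ n k (r : ℤ)) (qZ n k (s : ℤ))) =
    (2 * (m : PR n k ⧸ Igr n k)) * ∑ d ∈ range r, Ideal.Quotient.mk (Igr n k) (pZ n k (d : ℤ)) *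
      Ideal.Quotient.mk (Igr n k) (qZ n k ((m - d : ℕ) : ℤ)) := by
  have hmR : (m : PR n k ⧸ Igr n k) * ∑ u ∈ range (m + 1),
    Ideal.Quotient.mk (Igr n k) (pZ n k (u : ℤ)) *
      Ideal.Quotient.mk (Igr n k) (qZ n k ((m - u : ℕ) : ℤ)) = 0 := by
    rcases Nat.eq_zero_or_pos m with h | h
    · subst h; simp
    · rw [phi_R n k hk m h, mul_zero]
  rcases Nat.eq_zero_or_pos r with hr0 | hr0
  · subst hr0
    rw [Gam_comm, pZ_zero, Derivation.map_one_eq_zero]; simp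
  by_cases hr : k < r
  · rw [Gam_comm, pZ_big n k r hr, map_zero, map_zero]
    rw [mul_assoc]
    rw [Finset.sum_subset (s₁ := range r) (s₂ := range (m + 1 + 1)) ?_ ?_]
    · rw [Finset.sum_range_succ, pZ_big n k (m + 1) (by omega), map_zero, zero_mul, add_zero, hmR,
        mul_zero]
    · intro d hd; simp at hd ⊢; omega
    · intro d _ hd
      simp at hd
      rw [pZ_big n k d (by omega), map_zero, zero_mul]
  obtain ⟨a, rfl⟩ : ∃ a, r = a + 1 := ⟨r - 1, by omega⟩
  rcases Nat.eq_zero_or_pos s with hs0 | hs0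
  · subst hs0
    rw [qZ_zero, Derivation.map_one_eq_zero, show a + 1 = m + 1 by omega, mul_assoc, hmR]; simp
  by_cases hs : n - k < s
  · rw [qZ_big n k s hs, map_zero, map_zero, Finset.sum_eq_zero, mul_zero]
    intro d hd
    simp at hd
    rw [qZ_big n k (m - d) (by omega), map_zero, mul_zero]
  obtain ⟨b, rfl⟩ : ∃ b, s = b + 1 := ⟨s - 1, by omega⟩
  have e1 := pZ_X n k ⟨a, by omega⟩
  have e2 := qZ_X n k ⟨b, by omega⟩
  simp only at e1 e2
  rw [e1, e2, Gam_X]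
  obtain rfl : m = a + b + 1 := by omega
  simp only [aC, map_mul, map_add, map_sum, map_ofNat, map_natCast, map_one, map_zero, add_zero]
  push_cast
  rfl

theorem De_R (hk : k ≤ n) (m : ℕ) : De n k (Rm n k (m + 1)) ∈ Igr n k := by
  rw [← Ideal.Quotient.eq_zero_iff_mem, Rm_range]
  have key := aux_D (fun r : ℕ => Ideal.Quotient.mk (Igr n k) (pZ n k (r : ℤ)))
    (fun r : ℕ => Ideal.Quotient.mk (Igr n k) (qZ n k (r : ℤ))) (phi_R n k hk)
    (k : PR n k ⧸ Igr n k) ((n : PR n k ⧸ Igr n k) - (k : ℕ)) m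
  rw [map_sum]
  simp only [De_mul, Finset.sum_add_distrib, map_add]
  rw [← key, Finset.sum_add_distrib]
  congr 1
  · rw [add_comm]
    congr 1
    · rw [Finset.sum_range_succ', pZ_zero, De_one, mul_zero, add_zero, map_sum]
      refine Finset.sum_congr rfl fun u hu => ?_
      rw [De_p, show m + 1 - (u + 1) = m - u by omega]
      simp only [map_mul, map_neg, map_sub, map_add, map_natCast]
      ring
    · rw [Finset.sum_range_succ, Nat.sub_self, qZ_zero, De_one, mul_zero, add_zero, map_sum]
      refine Finset.sum_congr rfl fun u hu => ?_
      simp at hu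
      rw [show m + 1 - u = m - u + 1 by omega, De_q n k hk]
      simp only [map_mul, map_sub, map_add, map_natCast]
      ring
  · rw [map_sum]
    refine Finset.sum_congr rfl fun u hu => ?_
    simp at hu
    exact Gam_pq n k hk m u (m + 1 - u) (by omega)

theorem Gam_XR (hk : k ≤ n) (i : Fin k ⊕ Fin (n - k)) (m : ℕ) :
    Gam n k (X i) (Rm n k m) ∈ Igr n k := by
  rw [← Ideal.Quotient.eq_zero_iff_mem]
  rcases i with a | b
  · have key := aux_T (fun r : ℕ => Ideal.Quotient.mk (Igr n k) (pZ n k (r : ℤ)))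
      (fun r : ℕ => Ideal.Quotient.mk (Igr n k) (qZ n k (r : ℤ))) (phi_R n k hk) a m
    rw [Rm_range, map_sum, map_sum]
    have h2 := congrArg (fun x => 2 * x) key
    simp only [mul_zero] at h2
    refine Eq.trans ?_ h2
    rw [Finset.mul_sum]
    refine Finset.sum_congr rfl fun r hr => ?_
    simp at hr
    rw [Derivation.leibniz, smul_eq_mul, smul_eq_mul, Gam_pp, map_add, map_mul, ← pZ_X,
      Gam_pq n k hk (a + (m - r)) _ _ (by omega)]
    simp only [map_mul, map_add, map_sub, map_sum, map_ofNat, map_natCast]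
    push_cast
    ring
  · have key := aux_T (fun r : ℕ => Ideal.Quotient.mk (Igr n k) (qZ n k (r : ℤ)))
      (fun r : ℕ => Ideal.Quotient.mk (Igr n k) (pZ n k (r : ℤ))) (phi_R' n k hk) b m
    rw [Rm_range, ← Finset.sum_flip, map_sum, map_sum]
    have h2 := congrArg (fun x => -2 * x) key
    simp only [mul_zero] at h2
    refine Eq.trans ?_ h2
    rw [Finset.mul_sum]
    refine Finset.sum_congr rfl fun r hr => ?_
    simp at hr
    have hc : Ideal.Quotient.mk (Igr n k) (Gam n k (X (Sum.inr b)) (pZ n k ((m - r : ℕ) : ℤ))) =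
        -2 * (((b : ℕ) : PR n k ⧸ Igr n k) + (m - r : ℕ)) * ∑ d ∈ range ((b : ℕ) + 1),
          Ideal.Quotient.mk (Igr n k) (qZ n k (d : ℤ)) *
          Ideal.Quotient.mk (Igr n k) (pZ n k (((b : ℕ) + (m - r) - d : ℕ) : ℤ)) := by
      rw [Gam_comm, ← qZ_X, Gam_pq n k hk (b + (m - r)) _ _ (by omega)]
      obtain ⟨t, ht⟩ : ∃ t, t = m - r := ⟨_, rfl⟩
      rw [← ht]
      rcases Nat.eq_zero_or_pos ((b : ℕ) + t) with h0 | h0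
      · have hb : (b : ℕ) = 0 := by omega
        have ht0 : t = 0 := by omega
        simp [hb, ht0]
      · have hR := phi_R n k hk _ h0
        rw [show (b : ℕ) + t + 1 = t + (b + 1) by ring, Finset.sum_range_add] at hR
        rw [eq_neg_of_add_eq_zero_left hR, ← Finset.sum_range_reflect]
        have : ∀ d ∈ range ((b : ℕ) + 1),
            Ideal.Quotient.mk (Igr n k) (pZ n k ((t + ((b : ℕ) + 1 - 1 - d) : ℕ) : ℤ)) *
            Ideal.Quotient.mk (Igr n k) (qZ n k (((b : ℕ) + t - (t + ((b : ℕ) + 1 - 1 - d)) : ℕ) : ℤ))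
            = Ideal.Quotient.mk (Igr n k) (qZ n k (d : ℤ)) *
              Ideal.Quotient.mk (Igr n k) (pZ n k (((b : ℕ) + t - d : ℕ) : ℤ)) := by
          intro d hd
          simp at hd
          rw [mul_comm, show (b : ℕ) + t - (t + ((b : ℕ) + 1 - 1 - d)) = d by omega,
            show t + ((b : ℕ) + 1 - 1 - d) = (b : ℕ) + t - d by omega]
        rw [Finset.sum_congr rfl this]
        push_cast
        ring
    rw [Derivation.leibniz, smul_eq_mul, smul_eq_mul, show m - (m - r) = r by omega, Gam_qq,
      map_add, map_mul, map_mul _ (qZ n k (r : ℤ)), hc]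
    simp only [map_mul, map_add, map_sub, map_neg, map_sum, map_ofNat, map_natCast]
    ring

theorem Gam_R (hk : k ≤ n) (m : ℕ) (f : PR n k) : Gam n k f (Rm n k m) ∈ Igr n k := by
  rw [Gam_comm]
  induction f using MvPolynomial.induction_on with
  | C a =>
    have : Gam n k (Rm n k m) (C a) = 0 := Derivation.map_algebraMap _ a
    rw [this]; exact zero_mem _
  | add f g hf hg => rw [map_add]; exact add_mem hf hg
  | mul_X f i hf =>
    rw [Derivation.leibniz, smul_eq_mul, smul_eq_mul]
    refine add_mem (Ideal.mul_mem_left _ _ ?_) (Ideal.mul_mem_left _ _ hf)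
    rw [Gam_comm]
    exact Gam_XR n k hk i m

end Operator

/-- The second-order differential operator `D_e` preserves the ideal `I`, i.e. `D_e(I) ⊆ I`;
consequently `D_e` descends to a well-defined linear operator on the quotient `A = P/I`. -/
theorem De_preserves_ideal (n k : ℕ) (hk1 : 1 ≤ k) (hk2 : k ≤ n - 1) :
    ∀ g ∈ Igr n k, De n k g ∈ Igr n k := by
  intro g hg
  have hk : k ≤ n := by omega
  unfold Igr at hg
  induction hg using Submodule.span_induction with
  | mem x hx =>
    obtain ⟨m, hm, rfl⟩ := hx
    simp at hm
    obtain ⟨m', rfl⟩ : ∃ m', m = m' + 1 := ⟨m - 1, by omega⟩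
    exact De_R n k hk m'
  | zero => rw [map_zero]; exact zero_mem _
  | add x y _ _ hx hy => rw [map_add]; exact add_mem hx hy
  | smul a x hx' hx =>
    rw [smul_eq_mul, De_mul]
    refine add_mem (add_mem (Ideal.mul_mem_left _ _ hx) (Ideal.mul_mem_right _ _ hx')) ?_
    clear hx
    induction hx' using Submodule.span_induction with
    | mem x hx =>
      obtain ⟨m, hm, rfl⟩ := hx
      exact Gam_R n k hk m a
    | zero => rw [map_zero]; exact zero_mem _
    | add x y _ _ hx hy => rw [map_add]; exact add_mem hx hy
    | smul b x hx' hx =>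
      rw [smul_eq_mul, Derivation.leibniz, smul_eq_mul, smul_eq_mul]
      exact add_mem (Ideal.mul_mem_left _ _ hx) (Ideal.mul_mem_right _ _ hx')
end

section
/- For every m with 1 ≤ m ≤ n, define for nonnegative integers r, s with r+s = m the polynomial C^{(rs)} = −(k−r+1)(n−k+r−1)·p_{r−1}·q_s + (k+s−1)(n−k−s+1)·p_r·q_{s−1} + 2(r+s−1)·Σ_{d=0}^{r−1} p_d·q_{r+s−d−1}. Then Σ_{r+s=m, r,s≥0} C^{(rs)} lies in the ideal I. -/
open MvPolynomial Finset

/-- `C^{(rs)} = -(k-r+1)(n-k+r-1)·p_{r-1}·q_s + (k+s-1)(n-k-s+1)·p_r·q_{s-1}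
              + 2(r+s-1)·Σ_{d=0}^{r-1} p_d·q_{r+s-d-1}`. -/
noncomputable def Cpoly (n k : ℕ) (r s : ℕ) : PR n k :=
  (-(((k : ℂ) - (r : ℕ) + 1) * ((n : ℂ) - (k : ℕ) + (r : ℕ) - 1))) •
      (pZ n k ((r : ℤ) - 1) * qZ n k (s : ℕ))
  + (((k : ℂ) + (s : ℕ) - 1) * ((n : ℂ) - (k : ℕ) - (s : ℕ) + 1)) •
      (pZ n k (r : ℕ) * qZ n k ((s : ℤ) - 1))
  + (2 * ((r : ℂ) + (s : ℕ) - 1)) •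
      ∑ d ∈ Finset.range r, pZ n k (d : ℕ) * qZ n k ((r : ℤ) + (s : ℕ) - (d : ℕ) - 1)

theorem aux_double_sum {A : Type*} [AddCommGroup A] [Module ℂ A] (f : ℕ → A) (L : ℕ) :
    ∑ r ∈ Finset.range (L + 1), ∑ d ∈ Finset.range r, f d
      = ∑ d ∈ Finset.range L, ((L : ℂ) - (d : ℂ)) • f d := by
  induction L with
  | zero => simp
  | succ L ih =>
    rw [Finset.sum_range_succ, ih, Finset.sum_range_succ (fun d => f d),
      Finset.sum_range_succ (fun d => (((L + 1 : ℕ) : ℂ) - (d : ℂ)) • f d), ← add_assoc,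
      ← Finset.sum_add_distrib]
    congr 1
    · apply Finset.sum_congr rfl
      intro d _
      push_cast
      module
    · push_cast
      module

theorem aux_sum_C (n k M : ℕ) :
    ∑ x ∈ Finset.HasAntidiagonal.antidiagonal (M + 1), Cpoly n k x.1 x.2
      = ((M : ℂ) * ((n : ℂ) - 2 * k + M + 2)) • Rm n k M := by
  have hp : pZ n k (-1) = 0 := by simp [pZ]
  have hq : qZ n k (-1) = 0 := by simp [qZ]
  unfold Cpoly
  rw [Finset.sum_add_distrib, Finset.sum_add_distrib]
  have h1 := Finset.Nat.sum_antidiagonal_succ (n := M) (f := fun x : ℕ × ℕ =>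
    (-(((k : ℂ) - (x.1 : ℕ) + 1) * ((n : ℂ) - (k : ℕ) + (x.1 : ℕ) - 1))) •
      (pZ n k ((x.1 : ℤ) - 1) * qZ n k (x.2 : ℕ)))
  have h2 := Finset.Nat.sum_antidiagonal_succ' (n := M) (f := fun x : ℕ × ℕ =>
    (((k : ℂ) + (x.2 : ℕ) - 1) * ((n : ℂ) - (k : ℕ) - (x.2 : ℕ) + 1)) •
      (pZ n k (x.1 : ℕ) * qZ n k ((x.2 : ℤ) - 1)))
  have h3 : ∑ x ∈ Finset.HasAntidiagonal.antidiagonal (M + 1),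
      (2 * ((x.1 : ℂ) + (x.2 : ℕ) - 1)) •
      ∑ d ∈ Finset.range x.1,
        pZ n k (d : ℕ) * qZ n k ((x.1 : ℤ) + (x.2 : ℕ) - (d : ℕ) - 1)
      = ∑ x ∈ Finset.HasAntidiagonal.antidiagonal M,
        (2 * (M : ℂ) * ((x.2 : ℂ) + 1)) • (pZ n k x.1 * qZ n k x.2) := by
    have e : ∀ x ∈ Finset.HasAntidiagonal.antidiagonal (M + 1),
      (2 * ((x.1 : ℂ) + (x.2 : ℕ) - 1)) •
      ∑ d ∈ Finset.range x.1,
        pZ n k (d : ℕ) * qZ n k ((x.1 : ℤ) + (x.2 : ℕ) - (d : ℕ) - 1)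
      = (2 * (M : ℂ)) • ∑ d ∈ Finset.range x.1,
        pZ n k (d : ℕ) * qZ n k ((M : ℤ) - (d : ℕ)) := by
      intro x hx
      rw [Finset.HasAntidiagonal.mem_antidiagonal] at hx
      have hc : (x.1 : ℂ) + (x.2 : ℂ) = (M : ℂ) + 1 := by exact_mod_cast hx
      have hz : (x.1 : ℤ) + (x.2 : ℤ) = (M : ℤ) + 1 := by exact_mod_cast hx
      rw [hc, hz]
      congr 1
      · ring
      · apply Finset.sum_congr rfl
        intro d _
        congr 2
        ring
    rw [Finset.sum_congr rfl e, ← Finset.smul_sum,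
      Finset.Nat.sum_antidiagonal_eq_sum_range_succ_mk, aux_double_sum,
      Finset.Nat.sum_antidiagonal_eq_sum_range_succ_mk, Finset.smul_sum]
    apply Finset.sum_congr rfl
    intro d hd
    have hd' : d ≤ M := by
      rw [Finset.mem_range] at hd
      omega
    rw [smul_smul]
    simp only [Nat.cast_sub hd']
    congr 1
    push_cast
    ring
  rw [h1, h2, h3]
  simp only [Nat.cast_zero, zero_sub, hp, hq, zero_mul, mul_zero, smul_zero, zero_add, add_zero]
  rw [Rm, Finset.smul_sum, ← Finset.sum_add_distrib, ← Finset.sum_add_distrib]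
  apply Finset.sum_congr rfl
  intro x hx
  rw [Finset.HasAntidiagonal.mem_antidiagonal] at hx
  have hc : (M : ℂ) = (x.1 : ℂ) + (x.2 : ℂ) := by exact_mod_cast hx.symm
  have e1 : (((x.1 + 1 : ℕ) : ℤ) - 1) = (x.1 : ℤ) := by push_cast; ring
  have e2 : (((x.2 + 1 : ℕ) : ℤ) - 1) = (x.2 : ℤ) := by push_cast; ring
  rw [e1, e2, ← add_smul, ← add_smul, hc]
  congr 1
  push_cast
  ring

/-- For every `1 ≤ m ≤ n`, the sum `Σ_{r+s=m, r,s ≥ 0} C^{(rs)}` lies in the ideal `I`. -/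
theorem sum_C_mem_ideal (n k : ℕ) (hk1 : 1 ≤ k) (hk2 : k ≤ n - 1)
    (m : ℕ) (hm1 : 1 ≤ m) (hm2 : m ≤ n) :
    ∑ x ∈ Finset.HasAntidiagonal.antidiagonal m, Cpoly n k x.1 x.2 ∈ Igr n k := by
  obtain ⟨M, rfl⟩ : ∃ M, m = M + 1 := ⟨m - 1, by omega⟩
  rw [aux_sum_C]
  rcases Nat.eq_zero_or_pos M with h | h
  · subst h
    simp
  · rw [MvPolynomial.smul_eq_C_mul]
    apply Ideal.mul_mem_left
    apply Ideal.subset_span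
    exact ⟨M, by simp only [Finset.coe_Icc, Set.mem_Icc]; omega, rfl⟩
end

section
/- As linear operators on the polynomial ring P, the commutator of D_e and D_f equals D_h: [D_e, D_f] = D_h. -/
open MvPolynomial Finset

/-- The operator `D_h = -2 Σ_{j=1}^{k} j·p_j·∂/∂p_j - 2 Σ_{j=1}^{n-k} j·q_j·∂/∂q_j + k(n-k)·id`. -/
noncomputable def Dh (n k : ℕ) : Module.End ℂ (PR n k) :=
  ∑ j : Fin k, (-2 * ((j : ℕ) + 1) : ℂ) •
      (Mop n k (MvPolynomial.X (Sum.inl j)) * Pd n k (Sum.inl j))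
  + ∑ l : Fin (n - k), (-2 * ((l : ℕ) + 1) : ℂ) •
      (Mop n k (MvPolynomial.X (Sum.inr l)) * Pd n k (Sum.inr l))
  + ((k * (n - k) : ℕ) : ℂ) • 1

/-- The operator `D_f` = multiplication by `-p_1`. -/
noncomputable def Df (n k : ℕ) : Module.End ℂ (PR n k) :=
  Mop n k (-(pZ n k 1))

/-- The commutator with `D_f`, as a linear map. -/
noncomputable def adF (n k : ℕ) : Module.End ℂ (PR n k) →ₗ[ℂ] Module.End ℂ (PR n k) :=
  LinearMap.mulRight ℂ (Df n k) - LinearMap.mulLeft ℂ (Df n k)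

/-- Kronecker symbol of the variable `p_1`. -/
noncomputable def dl (n k : ℕ) (i : Fin k ⊕ Fin (n - k)) : ℂ :=
  Sum.elim (fun j : Fin k => if (j : ℕ) = 0 then 1 else 0) (fun _ => 0) i

lemma pderiv_p1 (n k : ℕ) (hk1 : 1 ≤ k) (i : Fin k ⊕ Fin (n - k)) :
    pderiv i (pZ n k 1) = C (dl n k i) := by
  have h : pZ n k 1 = X (Sum.inl ⟨0, hk1⟩) := by
    unfold pZ
    rw [if_neg (by norm_num), dif_pos (by omega)]
    rfl
  rw [h]
  rcases i with j | l
  · by_cases hj : (j : ℕ) = 0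
    · have : j = ⟨0, hk1⟩ := Fin.ext hj
      subst this
      simp [dl]
    · rw [pderiv_X_of_ne]
      · simp [dl, hj]
      · intro e
        apply hj
        have := Sum.inl.inj e
        rw [← this]
  · rw [pderiv_X_of_ne (by simp)]
    simp [dl]

lemma adF_one (n k : ℕ) (hk1 : 1 ≤ k) (g : PR n k) (i : Fin k ⊕ Fin (n - k)) :
    adF n k (Mop n k g * Pd n k i) = -(dl n k i • Mop n k g) := by
  apply LinearMap.ext
  intro f
  simp [adF, Mop, Pd, Df, pderiv_p1 n k hk1, Derivation.leibniz, smul_eq_C_mul]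
  ring

lemma adF_two (n k : ℕ) (hk1 : 1 ≤ k) (g : PR n k) (i l : Fin k ⊕ Fin (n - k)) :
    adF n k (Mop n k g * (Pd n k i * Pd n k l)) =
      -(dl n k i • (Mop n k g * Pd n k l)) - dl n k l • (Mop n k g * Pd n k i) := by
  apply LinearMap.ext
  intro f
  simp [adF, Mop, Pd, Df, pderiv_p1 n k hk1, Derivation.leibniz, smul_eq_C_mul]
  ring

lemma pZ_succ (n k : ℕ) (j : Fin k) : pZ n k ((j : ℕ) + 1 : ℤ) = X (Sum.inl j) := by
  unfold pZ
  rw [if_neg (by omega), dif_pos (by omega)]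
  congr 2
  apply Fin.ext
  simp

lemma qZ_succ (n k : ℕ) (j : Fin (n - k)) : qZ n k ((j : ℕ) + 1 : ℤ) = X (Sum.inr j) := by
  unfold qZ
  rw [if_neg (by omega), dif_pos (by omega)]
  congr 2
  apply Fin.ext
  simp

lemma antisym_sum (n k : ℕ) (j : ℕ) :
    ∑ d ∈ Finset.range (j + 1), ((j : ℂ) + 1 - 2 * (d : ℕ)) •
      (pZ n k d * pZ n k ((j : ℕ) + 1 - (d : ℕ) : ℤ)) =
    ((j : ℂ) + 1) • pZ n k ((j : ℕ) + 1 : ℤ) := by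
  set F : ℕ → PR n k := fun d => ((j : ℂ) + 1 - 2 * (d : ℕ)) •
      (pZ n k d * pZ n k ((j : ℕ) + 1 - (d : ℕ) : ℤ)) with hF
  have h0 : ∑ d ∈ Finset.range (j + 2), F d = 0 := by
    have h1 : ∑ d ∈ Finset.range (j + 2), F d = - ∑ d ∈ Finset.range (j + 2), F d := by
      conv_lhs => rw [← Finset.sum_range_reflect]
      rw [← Finset.sum_neg_distrib]
      apply Finset.sum_congr rfl
      intro d hd
      have hd' : d ≤ j + 1 := by simp at hd; omega
      obtain ⟨e, he⟩ := Nat.exists_eq_add_of_le hd'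
      have e1 : j + 2 - 1 - d = e := by omega
      have e2 : (j : ℤ) + 1 - (d : ℤ) = e := by omega
      have e3 : (j : ℤ) + 1 - (e : ℤ) = d := by omega
      have e4 : (j : ℂ) + 1 = d + e := by exact_mod_cast he
      simp only [hF, e1, e2, e3, e4]
      rw [mul_comm (pZ n k (e : ℤ)), ← neg_smul]
      congr 1
      ring
    exact self_eq_neg.mp h1
  rw [Finset.sum_range_succ] at h0
  rw [eq_neg_of_add_eq_zero_left h0, hF]
  have : pZ n k 0 = 1 := by simp [pZ]
  simp only [Nat.cast_add, Nat.cast_one, sub_self, this, mul_one]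
  rw [← neg_smul]
  congr 1
  ring

lemma sum_dl (n k : ℕ) (hk1 : 1 ≤ k) (G : Fin k → Module.End ℂ (PR n k)) :
    ∑ j : Fin k, dl n k (Sum.inl j) • G j = G ⟨0, hk1⟩ := by
  rw [Finset.sum_eq_single ⟨0, hk1⟩]
  · simp [dl]
  · intro b _ hb
    have : (b : ℕ) ≠ 0 := fun h => hb (Fin.ext h)
    simp [dl, this]
  · simp

lemma Mop_smul (n k : ℕ) (c : ℂ) (g : PR n k) : Mop n k (c • g) = c • Mop n k g := by
  apply LinearMap.ext
  intro f
  simp [Mop]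

/-- As operators on `P`, `[D_e, D_f] = D_h`. -/
theorem commutator_De_Df (n k : ℕ) (hk1 : 1 ≤ k) (hk2 : k ≤ n - 1) :
    De n k * Df n k - Df n k * De n k = Dh n k := by
  change adF n k (De n k) = Dh n k
  have hp0 : pZ n k 0 = 1 := by simp [pZ]
  have hM1 : Mop n k 1 = 1 := by
    apply LinearMap.ext
    intro f
    simp [Mop]
  have hr : ∀ l, dl n k (Sum.inr l) = 0 := fun l => rfl
  unfold De
  simp only [map_add, map_sub, map_sum, map_smul, adF_one n k hk1, adF_two n k hk1, hr,
    zero_smul, neg_zero, smul_zero, Finset.sum_const_zero, sub_zero, add_zero]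
  have t1 : ∑ j : Fin k, (-(((k : ℂ) - (j : ℕ)) * ((n : ℂ) - (k : ℕ) + (j : ℕ)))) •
      -(dl n k (Sum.inl j) • Mop n k (pZ n k (j : ℕ))) = ((k * (n - k) : ℕ) : ℂ) • 1 := by
    simp only [smul_neg, neg_smul, neg_neg]
    simp only [smul_comm _ (dl n k _)]
    rw [sum_dl n k hk1]
    simp [hp0, hM1, Nat.cast_sub (show k ≤ n by omega)]
  rw [t1]
  simp only [Finset.sum_sub_distrib, Finset.sum_neg_distrib, smul_neg]
  rw [Finset.sum_comm]
  simp only [smul_comm _ (dl n k _), sum_dl n k hk1]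
  rw [Finset.sum_comm (s := (Finset.univ : Finset (Fin k))) (t := (Finset.univ : Finset (Fin (n - k))))]
  simp only [sum_dl n k hk1]
  have hA := antisym_sum n k
  simp only [Nat.cast_zero, add_zero, zero_add, Finset.sum_range_one, CharP.cast_eq_zero,
    mul_zero, sub_zero, hp0, one_mul, hA, pZ_succ, qZ_succ, Mop_smul, smul_mul_assoc]
  unfold Dh
  have h2 : ∀ (c : ℂ) (T : Module.End ℂ (PR n k)), (-2 * c) • T = -(c • T + c • T) := by
    intro c T
    module
  have h3 : ∀ (c : ℂ) (T : Module.End ℂ (PR n k)), (2 * c) • T = c • T + c • T := by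
    intro c T
    module
  simp only [h2, h3, add_comm (1 : ℂ), Finset.sum_add_distrib, Finset.sum_neg_distrib]
  abel
end

section
/- As linear operators on the polynomial ring P, the commutator of D_h and D_e equals 2·D_e: [D_h, D_e] = 2·D_e. -/
open MvPolynomial Finset

theorem pderiv_pderiv_comm' {n k : ℕ} (i j : Fin k ⊕ Fin (n - k)) (f : PR n k) :
    pderiv i (pderiv j f) = pderiv j (pderiv i f) := by
  classical
  have h : ⁅pderiv (R := ℂ) i, pderiv (R := ℂ) j⁆ = 0 := by
    refine MvPolynomial.derivation_ext fun l => ?_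
    rw [Derivation.commutator_apply, pderiv_X, pderiv_X]
    simp only [Pi.single_apply]
    split_ifs <;> simp
  have h2 := congrArg (fun D => D f) h
  simp only [Derivation.commutator_apply, Derivation.zero_apply] at h2
  exact sub_eq_zero.mp h2

/-- The linear part of `Dh`. -/
noncomputable def EulerOp (n k : ℕ) : Module.End ℂ (PR n k) :=
  ∑ j : Fin k, (-2 * ((j : ℕ) + 1) : ℂ) •
      (Mop n k (MvPolynomial.X (Sum.inl j)) * Pd n k (Sum.inl j))
  + ∑ l : Fin (n - k), (-2 * ((l : ℕ) + 1) : ℂ) •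
      (Mop n k (MvPolynomial.X (Sum.inr l)) * Pd n k (Sum.inr l))

/-- `T` has weight `a` for the adjoint action of `EulerOp`. -/
def HasWt (n k : ℕ) (a : ℂ) (T : Module.End ℂ (PR n k)) : Prop :=
  EulerOp n k * T - T * EulerOp n k = a • T

/-- The polynomial `g` is an eigenvector of `EulerOp`. -/
def PWt (n k : ℕ) (a : ℂ) (g : PR n k) : Prop := EulerOp n k g = a • g

/-- weight of a variable -/
def wv (n k : ℕ) : Fin k ⊕ Fin (n - k) → ℂ
  | Sum.inl j => -2 * ((j : ℕ) + 1)
  | Sum.inr l => -2 * ((l : ℕ) + 1)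

theorem EulerOp_apply (n k : ℕ) (f : PR n k) :
    EulerOp n k f = ∑ i, wv n k i • (X i * pderiv i f) := by
  simp [EulerOp, Mop, Pd, Fintype.sum_sum_type, wv]

theorem EulerOp_mul (n k : ℕ) (f g : PR n k) :
    EulerOp n k (f * g) = EulerOp n k f * g + f * EulerOp n k g := by
  simp only [EulerOp_apply, Finset.sum_mul, Finset.mul_sum, ← Finset.sum_add_distrib]
  refine Finset.sum_congr rfl fun i _ => ?_
  simp only [Derivation.leibniz, smul_eq_mul, Algebra.smul_def]
  ring

theorem PWt_X (n k : ℕ) (i : Fin k ⊕ Fin (n - k)) : PWt n k (wv n k i) (X i) := by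
  classical
  unfold PWt
  rw [EulerOp_apply, Finset.sum_eq_single i]
  · simp
  · intro b _ hb
    simp [pderiv_X_of_ne (Ne.symm hb)]
  · simp

theorem PWt_one (n k : ℕ) : PWt n k 0 1 := by
  simp [PWt, EulerOp_apply]

theorem PWt_zero (n k : ℕ) (a : ℂ) : PWt n k a 0 := by
  simp [PWt]

theorem PWt.mul {n k : ℕ} {a b : ℂ} {f g : PR n k} (hf : PWt n k a f) (hg : PWt n k b g) :
    PWt n k (a + b) (f * g) := by
  unfold PWt at *
  rw [EulerOp_mul, hf, hg]
  simp only [Algebra.smul_def, map_add]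
  ring

theorem PWt.smul {n k : ℕ} {a : ℂ} (c : ℂ) {f : PR n k} (hf : PWt n k a f) :
    PWt n k a (c • f) := by
  unfold PWt at *
  rw [map_smul, hf, smul_comm]

theorem PWt.sum {n k : ℕ} {a : ℂ} {ι : Type*} {s : Finset ι} {f : ι → PR n k}
    (hf : ∀ i ∈ s, PWt n k a (f i)) : PWt n k a (∑ i ∈ s, f i) := by
  unfold PWt at *
  rw [map_sum, Finset.smul_sum, Finset.sum_congr rfl hf]

theorem PWt_pZ (n k : ℕ) (a : ℤ) : PWt n k (-2 * a) (pZ n k a) := by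
  unfold pZ
  split_ifs with h0 h
  · subst h0; simpa using PWt_one n k
  · convert PWt_X n k _ using 1
    have h2 : (((a - 1).toNat : ℤ) : ℂ) = ((a - 1 : ℤ) : ℂ) := by
      rw [Int.toNat_of_nonneg (by omega)]
    simp only [Int.cast_natCast] at h2
    simp only [wv, h2]; push_cast; ring
  · exact PWt_zero _ _ _

theorem PWt_qZ (n k : ℕ) (a : ℤ) : PWt n k (-2 * a) (qZ n k a) := by
  unfold qZ
  split_ifs with h0 h
  · subst h0; simpa using PWt_one n k
  · convert PWt_X n k _ using 1
    have h2 : (((a - 1).toNat : ℤ) : ℂ) = ((a - 1 : ℤ) : ℂ) := by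
      rw [Int.toNat_of_nonneg (by omega)]
    simp only [Int.cast_natCast] at h2
    simp only [wv, h2]; push_cast; ring
  · exact PWt_zero _ _ _

theorem HasWt.add {n k : ℕ} {a : ℂ} {S T : Module.End ℂ (PR n k)}
    (hS : HasWt n k a S) (hT : HasWt n k a T) : HasWt n k a (S + T) := by
  unfold HasWt at *
  rw [smul_add, ← hS, ← hT]; noncomm_ring

theorem HasWt.sub {n k : ℕ} {a : ℂ} {S T : Module.End ℂ (PR n k)}
    (hS : HasWt n k a S) (hT : HasWt n k a T) : HasWt n k a (S - T) := by
  unfold HasWt at *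
  rw [smul_sub, ← hS, ← hT, mul_sub, sub_mul]; abel

theorem HasWt.smul {n k : ℕ} {a : ℂ} (c : ℂ) {T : Module.End ℂ (PR n k)}
    (hT : HasWt n k a T) : HasWt n k a (c • T) := by
  unfold HasWt at *
  rw [smul_comm, ← hT, smul_sub, mul_smul_comm, smul_mul_assoc]

theorem HasWt.sum {n k : ℕ} {a : ℂ} {ι : Type*} {s : Finset ι} {f : ι → Module.End ℂ (PR n k)}
    (hf : ∀ i ∈ s, HasWt n k a (f i)) : HasWt n k a (∑ i ∈ s, f i) := by
  unfold HasWt at *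
  rw [Finset.mul_sum, Finset.sum_mul, ← Finset.sum_sub_distrib, Finset.smul_sum,
    Finset.sum_congr rfl hf]

theorem HasWt.mul {n k : ℕ} {a b : ℂ} {S T : Module.End ℂ (PR n k)}
    (hS : HasWt n k a S) (hT : HasWt n k b T) : HasWt n k (a + b) (S * T) := by
  unfold HasWt at *
  rw [add_smul, ← smul_mul_assoc, ← mul_smul_comm b, ← hS, ← hT, sub_mul, mul_sub]
  simp only [mul_assoc]; abel

theorem HasWt_Mop {n k : ℕ} {a : ℂ} {g : PR n k} (hg : PWt n k a g) :
    HasWt n k a (Mop n k g) := by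
  unfold HasWt PWt at *
  refine LinearMap.ext fun f => ?_
  simp [Mop, EulerOp_mul, hg]

theorem HasWt_Pd (n k : ℕ) (i : Fin k ⊕ Fin (n - k)) :
    HasWt n k (-wv n k i) (Pd n k i) := by
  classical
  unfold HasWt
  refine LinearMap.ext fun f => ?_
  have hcomm : ∀ j, pderiv i (pderiv j f) = pderiv j (pderiv i f) := fun j =>
    pderiv_pderiv_comm' i j f
  simp only [Pd, LinearMap.sub_apply, Module.End.mul_apply, LinearMap.smul_apply,
    Derivation.coeFn_coe, EulerOp_apply, map_sum, Derivation.map_smul, Derivation.leibniz,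
    smul_eq_mul, smul_add, Finset.sum_add_distrib, hcomm]
  rw [sub_add_cancel_left, Finset.sum_eq_single i]
  · simp
  · intro b _ hb
    simp [pderiv_X_of_ne hb]
  · simp

theorem HasWt_two {n k : ℕ} {i j : Fin k ⊕ Fin (n - k)} {g : PR n k}
    (hg : PWt n k (2 + wv n k i + wv n k j) g) :
    HasWt n k 2 (Mop n k g * (Pd n k i * Pd n k j)) := by
  convert (HasWt_Mop hg).mul ((HasWt_Pd n k i).mul (HasWt_Pd n k j)) using 1
  ring

theorem De_HasWt (n k : ℕ) : HasWt n k 2 (De n k) := by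
  unfold De
  refine HasWt.add (HasWt.sub (HasWt.add (HasWt.add ?_ ?_) ?_) ?_) ?_
  · refine HasWt.sum fun j _ => HasWt.smul _ ?_
    convert (HasWt_Mop (PWt_pZ n k _)).mul (HasWt_Pd n k _) using 1
    simp only [wv]; push_cast; ring
  · refine HasWt.sum fun j _ => HasWt.smul _ ?_
    convert (HasWt_Mop (PWt_qZ n k _)).mul (HasWt_Pd n k _) using 1
    simp only [wv]; push_cast; ring
  · refine HasWt.sum fun j _ => HasWt.sum fun l _ => HasWt_two (PWt.sum fun d _ => PWt.smul _ ?_)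
    convert (PWt_pZ n k _).mul (PWt_pZ n k _) using 1
    simp only [wv]; push_cast; ring
  · refine HasWt.sum fun j _ => HasWt.sum fun l _ => HasWt_two (PWt.sum fun d _ => PWt.smul _ ?_)
    convert (PWt_qZ n k _).mul (PWt_qZ n k _) using 1
    simp only [wv]; push_cast; ring
  · refine HasWt.sum fun j _ => HasWt.sum fun l _ => HasWt.smul _ (HasWt_two (PWt.sum fun d _ => ?_))
    convert (PWt_pZ n k _).mul (PWt_qZ n k _) using 1
    simp only [wv]; push_cast; ring

/-- As operators on `P`, `[D_h, D_e] = 2·D_e`. -/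
theorem commutator_Dh_De (n k : ℕ) (hk1 : 1 ≤ k) (hk2 : k ≤ n - 1) :
    Dh n k * De n k - De n k * Dh n k = (2 : ℂ) • De n k := by
  have h := De_HasWt n k
  unfold HasWt at h
  have hD : Dh n k = EulerOp n k + ((k * (n - k) : ℕ) : ℂ) • 1 := rfl
  rw [← h, hD, add_mul, mul_add, smul_mul_assoc, mul_smul_comm, one_mul, mul_one,
    add_sub_add_right_eq_sub]
end
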